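/- Let ψ: ℕ → (0,∞) with ψ(n) → ∞ and ψ(n)/n → 0. Then the set E_sup(ψ) = { x ∈ (0,1] : limsup_{n→∞} (log d_n(x))/ψ(n) = 1 } has Hausdorff dimension 1. -/

import Mathlib

open Filter Topology Real Set

/-- The first Lüroth digit: `d₁(x) = ⌊1/x⌋ + 1`. -/
noncomputable def lurothD1 (x : ℝ) : ℕ := ⌊1 / x⌋₊ + 1

/-- The Lüroth map `T(x) = d₁(x)(d₁(x)-1)(x - 1/d₁(x))`. -/
noncomputable def lurothT (x : ℝ) : ℝ :=
  (lurothD1 x : ℝ) * ((lurothD1 x : ℝ) - 1) * (x - 1 / (lurothD1 x : ℝ))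

/-- The `n`-th Lüroth digit `dₙ(x) = d₁(T^{n-1}(x))`. -/
noncomputable def lurothDigit (n : ℕ) (x : ℝ) : ℕ := lurothD1 (lurothT^[n - 1] x)

/-!
Composing the Lüroth map with the affine bijection of `(0, 1]` onto `(1 / M, 1]` gives a full-branch
map with digits `2, …, M`, so every `t ∈ (0, 1]` is encoded by a sequence of such digits, and the
contraction ratios exceed the Lüroth ratios only by the factor `1 / (1 - 1 / M)`. For `s < 1`,
passing from a Lüroth ratio `r ≤ 1 / 2` to `r ^ s` gains a factor at least `2 ^ (1 - s)`, more than
this factor when `M` is large. The gain is thus exponential in the number of digits, while the cost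
`q n ^ 2` of inserting a prescribed digit `q n` grows subexponentially; hence prescribed digits can
be inserted at infinitely many, sparsely chosen times so that `t` remains an `s`-Hölder function of
the point with the resulting Lüroth digits. These points therefore form a set of dimension at least
`s`. For `q n = ⌊exp (ψ n)⌋` their digits are eventually at most `q n` and infinitely often equal to
`q n`, which makes the upper limit of `log (d n) / ψ n` equal to `1`.
-/

open scoped NNReal ENNReal Asymptotics

section General

lemma eq_prod_range_mul_of_forall_lt {R : Type*} [CommMonoid R] {e w : ℕ → R} {n : ℕ}
    (h : ∀ i < n, e i = w i * e (i + 1)) : e 0 = (∏ i ∈ Finset.range n, w i) * e n := by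
  induction n with
  | zero => simp
  | succ n ih =>
    rw [ih fun i hi => h i (hi.trans n.lt_succ_self), h n n.lt_succ_self, Finset.prod_range_succ,
      mul_assoc]

lemma dimH_le_dimH_image_div {X Y : Type*} [EMetricSpace X] [EMetricSpace Y] {f : X → Y}
    {A : Set X} {C s : ℝ≥0} (hs : 0 < s)
    (h : ∀ x ∈ A, ∀ y ∈ A, edist x y ≤ C * edist (f x) (f y) ^ (s : ℝ)) :
    dimH A ≤ dimH (f '' A) / s := by
  rcases A.eq_empty_or_nonempty with rfl | ⟨a, -⟩
  · simp
  have : Nonempty X := ⟨a⟩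
  have hinj : A.InjOn f := fun x hx y hy hxy => by
    have hdist := h x hx y hy
    rw [hxy, edist_self, ENNReal.zero_rpow_of_pos (by exact_mod_cast hs), mul_zero] at hdist
    exact edist_le_zero.1 hdist
  have hinv := hinj.leftInvOn_invFunOn
  have hholder : HolderOnWith C s (Function.invFunOn f A) (f '' A) := by
    rintro _ ⟨x, hx, rfl⟩ _ ⟨y, hy, rfl⟩
    rw [hinv hx, hinv hy]
    exact h x hx y hy
  simpa only [hinv.image_image] using hholder.dimH_image_le hs

lemma edist_le_mul_edist_rpow_of_dist_le {X Y : Type*} [PseudoMetricSpace X]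
    [PseudoMetricSpace Y] {x x' : X} {y y' : Y} {C s : ℝ≥0}
    (h : dist x x' ≤ C * dist y y' ^ (s : ℝ)) : edist x x' ≤ C * edist y y' ^ (s : ℝ) := by
  rw [edist_dist, edist_dist, ENNReal.ofReal_rpow_of_nonneg dist_nonneg s.coe_nonneg,
    ← ENNReal.ofReal_coe_nnreal, ← ENNReal.ofReal_mul C.coe_nonneg]
  exact ENNReal.ofReal_le_ofReal h

lemma limsup_eq_of_tendsto_of_le_of_frequently_eq {ι R : Type*} [ConditionallyCompleteLinearOrder R]
    [DenselyOrdered R] [TopologicalSpace R] [OrderTopology R] {f : Filter ι} {u v : ι → R} {a : R}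
    (hv : Tendsto v f (𝓝 a)) (hle : ∀ᶠ i in f, u i ≤ v i) (heq : ∃ᶠ i in f, u i = v i) :
    limsup u f = a := by
  have : f.NeBot := (frequently_true_iff_neBot f).1 (heq.mono fun _ _ => trivial)
  have hbdd : IsBoundedUnder (· ≤ ·) f u := hv.isBoundedUnder_le.mono_le hle
  have hcobdd : IsCoboundedUnder (· ≤ ·) f u := by
    obtain ⟨c, hc⟩ := hv.isBoundedUnder_ge
    exact IsCoboundedUnder.of_frequently_ge
      ((heq.and_eventually (eventually_map.1 hc)).mono fun i hi => hi.1 ▸ hi.2)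
  refine le_antisymm ((limsup_le_limsup hle hcobdd hv.isBoundedUnder_le).trans_eq hv.limsup_eq) ?_
  refine le_of_forall_lt_imp_le_of_dense fun b hb => le_limsup_of_frequently_le ?_ hbdd
  exact (heq.and_eventually (hv.eventually_const_lt hb)).mono fun i hi => hi.1 ▸ hi.2.le

/- Greedy choice: an index is put into `S` whenever the product, with the factor `κ n` included,
stays at most `1`; if this happened only finitely often, the product would decay like `l ^ n`, and
`κ n` would fit in after all. -/
open Classical in
lemma exists_frequently_mem_prod_piecewise_le_one {κ : ℕ → ℝ} {l : ℝ} (hl : l ∈ Ioo (0 : ℝ) 1)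
    (hκ : Tendsto (fun n => κ n * l ^ n) atTop (𝓝 0)) :
    ∃ S : Set ℕ, (∃ᶠ n in atTop, n ∈ S) ∧
      ∀ n, ∏ i ∈ Finset.range n, S.piecewise κ (fun _ => l) i ≤ 1 := by
  let p : ℕ → ℝ := fun n => Nat.rec 1 (fun n b => b * if b * κ n ≤ 1 then κ n else l) n
  have hp (n : ℕ) : p (n + 1) = p n * if p n * κ n ≤ 1 then κ n else l := rfl
  let S : Set ℕ := {n | p n * κ n ≤ 1}
  have hprod (n : ℕ) : ∏ i ∈ Finset.range n, S.piecewise κ (fun _ => l) i = p n :=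
    Finset.prod_range_induction _ _ rfl n fun n _ => hp n
  refine ⟨S, fun hfin => ?_, fun n => ?_⟩
  · obtain ⟨N, hN⟩ := eventually_atTop.1 hfin
    have hgeom (k : ℕ) : p (N + k) = p N * l ^ k := by
      induction k with
      | zero => simp
      | succ k ih =>
        have hk : ¬ p (N + k) * κ (N + k) ≤ 1 := hN _ (Nat.le_add_right N k)
        rw [← add_assoc, hp, if_neg hk, ih, pow_succ, mul_assoc]
    have hlim : Tendsto (fun k => p N / l ^ N * (κ (k + N) * l ^ (k + N))) atTop (𝓝 0) := by
      simpa only [mul_zero] using ((tendsto_add_atTop_iff_nat N).2 hκ).const_mul (p N / l ^ N)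
    obtain ⟨k, hk⟩ := (hlim.eventually_lt_const zero_lt_one).exists
    refine hN (N + k) (Nat.le_add_right N k) (le_of_eq_of_le ?_ hk.le)
    rw [hgeom, add_comm k N, pow_add]
    field_simp [hl.1.ne']
  · rw [hprod]
    induction n with
    | zero => exact le_rfl
    | succ n ih =>
      rw [hp]
      split_ifs with h
      · exact h
      · exact mul_le_one₀ ih hl.1.le hl.2.le

lemma tendsto_pow_mul_pow_of_tendsto_log_div {a : ℕ → ℝ} (ha : ∀ᶠ n in atTop, 0 < a n)
    (hlog : Tendsto (fun n => log (a n) / n) atTop (𝓝 0)) (k : ℕ) {l : ℝ}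
    (hl : l ∈ Ioo (0 : ℝ) 1) : Tendsto (fun n => a n ^ k * l ^ n) atTop (𝓝 0) := by
  have hexponent : Tendsto (fun n : ℕ => n * (k * (log (a n) / n) + log l)) atTop atBot :=
    tendsto_natCast_atTop_atTop.atTop_mul_neg (log_neg hl.1 hl.2)
      (by simpa only [mul_zero, zero_add] using (hlog.const_mul (k : ℝ)).add_const (log l))
  refine (tendsto_exp_atBot.comp hexponent).congr' ?_
  filter_upwards [ha, eventually_ne_atTop 0] with n han hn
  rw [Function.comp_apply, mul_add, mul_left_comm, mul_div_cancel₀ _ (Nat.cast_ne_zero.2 hn),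
    exp_add, exp_nat_mul, exp_log han, exp_nat_mul, exp_log hl.1]

lemma tendsto_log_floor_exp_div : Tendsto (fun y : ℝ => log ⌊exp y⌋₊ / y) atTop (𝓝 1) := by
  have hequiv : (fun y : ℝ => log ⌊exp y⌋₊) ~[atTop] fun y => log (exp y) :=
    (Asymptotics.isEquivalent_nat_floor (R := ℝ)).comp_tendsto tendsto_exp_atTop |>.log
      tendsto_exp_atTop
  simp only [log_exp] at hequiv
  exact (Asymptotics.isEquivalent_iff_tendsto_one (eventually_ne_atTop 0)).1 hequiv

lemma exists_nat_rpow_le_mul_one_sub_inv {a r : ℝ} (ha : a ∈ Ioo (0 : ℝ) 1) (hr : 0 < r) :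
    ∃ M : ℕ, 2 ≤ M ∧ ∃ l ∈ Ioo (0 : ℝ) 1, a ^ r ≤ l * (1 - (M : ℝ)⁻¹) := by
  obtain ⟨l, hal, hl⟩ := exists_between (rpow_lt_one ha.1.le ha.2 hr)
  have hlim : Tendsto (fun M : ℕ => l * (1 - (M : ℝ)⁻¹)) atTop (𝓝 l) := by
    simpa using ((tendsto_inv_atTop_nhds_zero_nat (𝕜 := ℝ)).const_sub 1).const_mul l
  obtain ⟨M, hM, hM2⟩ := ((hlim.eventually_const_lt hal).and (eventually_ge_atTop 2)).exists
  exact ⟨M, hM2, l, ⟨(rpow_pos_of_pos ha.1 r).trans hal, hl⟩, hM.le⟩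

end General

/-- The contraction ratio `1 / (d (d - 1))` of the inverse branch of the Lüroth map at digit `d`. -/
noncomputable def lurothRatio (d : ℕ) : ℝ := ((d : ℝ) * (d - 1))⁻¹

/-- The inverse branch of the Lüroth map at digit `d`, which sends `(0, 1]` onto the cylinder
`(1 / d, 1 / (d - 1)]` of first digit `d`. -/
noncomputable def lurothBranch (d : ℕ) (y : ℝ) : ℝ := (d : ℝ)⁻¹ + lurothRatio d * y

section Branch

variable {d : ℕ} {x y : ℝ}

lemma lurothRatio_pos (hd : 2 ≤ d) : 0 < lurothRatio d := by
  have hd' : (2 : ℝ) ≤ d := Nat.ofNat_le_cast.2 hd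
  exact inv_pos.2 (mul_pos (by linarith) (by linarith))

lemma lurothRatio_le_half (hd : 2 ≤ d) : lurothRatio d ≤ 1 / 2 := by
  have hd' : (2 : ℝ) ≤ d := Nat.ofNat_le_cast.2 hd
  rw [lurothRatio, one_div]
  exact inv_anti₀ two_pos (by nlinarith)

lemma inv_sq_le_lurothRatio (hd : 2 ≤ d) {a : ℝ} (hda : d ≤ a) : (a ^ 2)⁻¹ ≤ lurothRatio d := by
  have hd' : (2 : ℝ) ≤ d := Nat.ofNat_le_cast.2 hd
  exact inv_anti₀ (mul_pos (by linarith) (by linarith)) (by nlinarith)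

lemma lurothBranch_sub_lurothBranch (d : ℕ) (y y' : ℝ) :
    lurothBranch d y - lurothBranch d y' = lurothRatio d * (y - y') := by
  unfold lurothBranch
  ring

lemma lurothBranch_strictMono (hd : 2 ≤ d) : StrictMono (lurothBranch d) := fun _ _ hy =>
  add_lt_add_right (mul_lt_mul_of_pos_left hy (lurothRatio_pos hd)) _

lemma lurothBranch_zero (d : ℕ) : lurothBranch d 0 = (d : ℝ)⁻¹ := by
  rw [lurothBranch, mul_zero, add_zero]

lemma lurothBranch_one (hd : 2 ≤ d) : lurothBranch d 1 = ((d : ℝ) - 1)⁻¹ := by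
  have hd' : (2 : ℝ) ≤ d := Nat.ofNat_le_cast.2 hd
  have hd1 : (d : ℝ) - 1 ≠ 0 := by linarith
  unfold lurothBranch lurothRatio
  field_simp
  ring

lemma lurothBranch_mem_Ioc (hd : 2 ≤ d) (hy : y ∈ Ioc (0 : ℝ) 1) :
    lurothBranch d y ∈ Ioc (d : ℝ)⁻¹ ((d : ℝ) - 1)⁻¹ := by
  rw [← lurothBranch_zero, ← lurothBranch_one hd]
  exact ⟨lurothBranch_strictMono hd hy.1, (lurothBranch_strictMono hd).monotone hy.2⟩

lemma lurothD1_eq_iff (hd : 2 ≤ d) (hx : 0 < x) :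
    lurothD1 x = d ↔ x ∈ Ioc (d : ℝ)⁻¹ ((d : ℝ) - 1)⁻¹ := by
  obtain ⟨k, rfl⟩ : ∃ k, d = k + 1 := ⟨d - 1, by omega⟩
  have hk : (0 : ℝ) < k := by exact_mod_cast (by omega : 0 < k)
  rw [lurothD1, Nat.add_right_cancel_iff, Nat.floor_eq_iff (by positivity), one_div,
    Nat.cast_add_one, add_sub_cancel_right, le_inv_comm₀ hk hx, inv_lt_comm₀ hx (by positivity),
    and_comm, mem_Ioc]

lemma two_le_lurothD1 (hx : x ∈ Ioc (0 : ℝ) 1) : 2 ≤ lurothD1 x := by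
  have hfloor : 1 ≤ ⌊1 / x⌋₊ := Nat.one_le_floor_iff _ |>.2 ((one_le_div hx.1).2 hx.2)
  exact Nat.succ_le_succ hfloor

lemma lurothD1_le {M : ℕ} (hM : M ≠ 0) (hx : (M : ℝ)⁻¹ < x) : lurothD1 x ≤ M := by
  have hM' : (0 : ℝ) < M := by positivity
  have hx0 : 0 < x := (inv_pos.2 hM').trans hx
  rw [lurothD1, Nat.add_one_le_iff, Nat.floor_lt (by positivity), one_div]
  exact (inv_lt_comm₀ hM' hx0).1 hx

lemma lurothBranch_lurothT (hx : x ∈ Ioc (0 : ℝ) 1) :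
    lurothBranch (lurothD1 x) (lurothT x) = x := by
  have hd : (2 : ℝ) ≤ lurothD1 x := Nat.ofNat_le_cast.2 (two_le_lurothD1 hx)
  have hd1 : (lurothD1 x : ℝ) - 1 ≠ 0 := by linarith
  unfold lurothBranch lurothRatio lurothT
  field_simp
  ring

lemma lurothT_mem_Ioc (hx : x ∈ Ioc (0 : ℝ) 1) : lurothT x ∈ Ioc (0 : ℝ) 1 := by
  have hd := two_le_lurothD1 hx
  have hcyl : lurothBranch (lurothD1 x) (lurothT x) ∈
      Ioc (lurothBranch (lurothD1 x) 0) (lurothBranch (lurothD1 x) 1) := by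
    rw [lurothBranch_lurothT hx, lurothBranch_zero, lurothBranch_one hd]
    exact (lurothD1_eq_iff hd hx.1).1 rfl
  have hmono := lurothBranch_strictMono hd
  exact ⟨hmono.lt_iff_lt.1 hcyl.1, hmono.le_iff_le.1 hcyl.2⟩

lemma lurothD1_lurothBranch (hd : 2 ≤ d) (hy : y ∈ Ioc (0 : ℝ) 1) :
    lurothD1 (lurothBranch d y) = d := by
  have hcyl := lurothBranch_mem_Ioc hd hy
  exact (lurothD1_eq_iff hd (lt_of_le_of_lt (by positivity) hcyl.1)).2 hcyl

lemma lurothT_lurothBranch (hd : 2 ≤ d) (hy : y ∈ Ioc (0 : ℝ) 1) :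
    lurothT (lurothBranch d y) = y := by
  have hd' : (2 : ℝ) ≤ d := Nat.ofNat_le_cast.2 hd
  have hd1 : (d : ℝ) - 1 ≠ 0 := by linarith
  rw [lurothT, lurothD1_lurothBranch hd hy, lurothBranch, lurothRatio]
  field_simp
  ring

lemma div_sq_le_lurothBranch_sub {d' M : ℕ} (hd : 2 ≤ d) (hdd' : d < d') (hd'M : d' ≤ M)
    {y' ε : ℝ} (hy : 0 ≤ y) (hy' : y' ≤ 1) (hε : ε ≤ 1 + y - y') :
    ε / M ^ 2 ≤ lurothBranch d y - lurothBranch d' y' := by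
  have hd' : 2 ≤ d' := hd.trans hdd'.le
  have hgap : lurothBranch d' 1 ≤ (d : ℝ)⁻¹ := by
    have h0 : (0 : ℝ) < d := by positivity
    have h1 : (d : ℝ) + 1 ≤ d' := by exact_mod_cast hdd'
    rw [lurothBranch_one hd']
    exact inv_anti₀ h0 (by linarith)
  have hr : ((M : ℝ) ^ 2)⁻¹ ≤ lurothRatio d :=
    inv_sq_le_lurothRatio hd (Nat.cast_le.2 (hdd'.le.trans hd'M))
  have hr' : ((M : ℝ) ^ 2)⁻¹ ≤ lurothRatio d' := inv_sq_le_lurothRatio hd' (Nat.cast_le.2 hd'M)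
  calc ε / M ^ 2 = ((M : ℝ) ^ 2)⁻¹ * ε := div_eq_inv_mul _ _
    _ ≤ ((M : ℝ) ^ 2)⁻¹ * (y + (1 - y')) := by gcongr; linarith
    _ ≤ lurothRatio d * y + lurothRatio d' * (1 - y') := by
      rw [mul_add]
      have := sub_nonneg.2 hy'
      gcongr
    _ = lurothBranch d y - (d : ℝ)⁻¹ + (lurothBranch d' 1 - lurothBranch d' y') := by
      rw [← lurothBranch_zero, lurothBranch_sub_lurothBranch, lurothBranch_sub_lurothBranch,
        sub_zero]
    _ ≤ lurothBranch d y - lurothBranch d' y' := by linarith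

end Branch

/-- The Lüroth series `1 / D₀ + 1 / (D₀ (D₀ - 1) D₁) + ⋯`, the point with Lüroth digits
`D 0, D 1, …`. Positions are counted from `0`, whereas `lurothDigit` counts them from `1`. -/
noncomputable def lurothSeries (D : ℕ → ℕ) : ℝ :=
  ∑' k, (∏ i ∈ Finset.range k, lurothRatio (D i)) * (D k : ℝ)⁻¹

section Series

variable {D D' : ℕ → ℕ}

lemma prod_lurothRatio_pos (hD : ∀ n, 2 ≤ D n) (n : ℕ) :
    0 < ∏ i ∈ Finset.range n, lurothRatio (D i) :=
  Finset.prod_pos fun i _ => lurothRatio_pos (hD i)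

lemma prod_lurothRatio_le_half_pow (hD : ∀ n, 2 ≤ D n) (n : ℕ) :
    ∏ i ∈ Finset.range n, lurothRatio (D i) ≤ (1 / 2) ^ n := by
  simpa using Finset.prod_le_prod (s := Finset.range n)
    (fun i _ => (lurothRatio_pos (hD i)).le) fun i _ => lurothRatio_le_half (hD i)

lemma lurothSeries_term_pos (hD : ∀ n, 2 ≤ D n) (k : ℕ) :
    0 < (∏ i ∈ Finset.range k, lurothRatio (D i)) * (D k : ℝ)⁻¹ :=
  mul_pos (prod_lurothRatio_pos hD k) (inv_pos.2 (Nat.cast_pos.2 (two_pos.trans_le (hD k))))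

lemma lurothSeries_term_le (hD : ∀ n, 2 ≤ D n) (k : ℕ) :
    (∏ i ∈ Finset.range k, lurothRatio (D i)) * (D k : ℝ)⁻¹ ≤ 1 / 2 / 2 ^ k :=
  calc (∏ i ∈ Finset.range k, lurothRatio (D i)) * (D k : ℝ)⁻¹ ≤ (1 / 2) ^ k * 2⁻¹ :=
        mul_le_mul (prod_lurothRatio_le_half_pow hD k)
          (inv_anti₀ two_pos (Nat.ofNat_le_cast.2 (hD k))) (by positivity) (by positivity)
    _ = 1 / 2 / 2 ^ k := by rw [one_div_pow]; ring

lemma summable_lurothSeries (hD : ∀ n, 2 ≤ D n) :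
    Summable fun k => (∏ i ∈ Finset.range k, lurothRatio (D i)) * (D k : ℝ)⁻¹ :=
  (hasSum_geometric_two' 1).summable.of_nonneg_of_le (fun k => (lurothSeries_term_pos hD k).le)
    (lurothSeries_term_le hD)

lemma lurothSeries_mem_Ioc_zero_one (hD : ∀ n, 2 ≤ D n) : lurothSeries D ∈ Ioc (0 : ℝ) 1 :=
  ⟨(summable_lurothSeries hD).tsum_pos (fun k => (lurothSeries_term_pos hD k).le) 0
      (lurothSeries_term_pos hD 0),
    hasSum_le (lurothSeries_term_le hD) (summable_lurothSeries hD).hasSum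
      (hasSum_geometric_two' 1)⟩

lemma lurothSeries_eq_lurothBranch (hD : ∀ n, 2 ≤ D n) :
    lurothSeries D = lurothBranch (D 0) (lurothSeries fun i => D (i + 1)) := by
  unfold lurothSeries lurothBranch
  rw [(summable_lurothSeries hD).tsum_eq_zero_add, ← tsum_mul_left]
  congr 1
  · simp
  · exact tsum_congr fun k => by rw [Finset.prod_range_succ']; ring

lemma lurothSeries_mem_Ioc (hD : ∀ n, 2 ≤ D n) :
    lurothSeries D ∈ Ioc (D 0 : ℝ)⁻¹ ((D 0 : ℝ) - 1)⁻¹ := by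
  rw [lurothSeries_eq_lurothBranch hD]
  exact lurothBranch_mem_Ioc (hD 0) (lurothSeries_mem_Ioc_zero_one fun i => hD (i + 1))

lemma lurothSeries_shift_eq_lurothBranch (hD : ∀ n, 2 ≤ D n) (n : ℕ) :
    (lurothSeries fun i => D (i + n)) =
      lurothBranch (D n) (lurothSeries fun i => D (i + (n + 1))) := by
  rw [lurothSeries_eq_lurothBranch fun i => hD (i + n)]
  simp only [zero_add, add_right_comm _ 1 n, add_assoc]

lemma lurothT_iterate_lurothSeries (hD : ∀ n, 2 ≤ D n) (n : ℕ) :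
    lurothT^[n] (lurothSeries D) = lurothSeries fun i => D (i + n) := by
  induction n with
  | zero => rfl
  | succ n ih =>
    rw [Function.iterate_succ_apply', ih, lurothSeries_shift_eq_lurothBranch hD n,
      lurothT_lurothBranch (hD n) (lurothSeries_mem_Ioc_zero_one fun i => hD _)]

lemma lurothDigit_lurothSeries (hD : ∀ n, 2 ≤ D n) (n : ℕ) :
    lurothDigit (n + 1) (lurothSeries D) = D n := by
  rw [lurothDigit, Nat.add_sub_cancel, lurothT_iterate_lurothSeries hD,
    lurothSeries_shift_eq_lurothBranch hD,
    lurothD1_lurothBranch (hD n) (lurothSeries_mem_Ioc_zero_one fun i => hD _)]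

lemma dist_lurothSeries_le_one_sub_inv (hD : ∀ n, 2 ≤ D n) (hD' : ∀ n, 2 ≤ D' n) {M : ℕ}
    (hM : 2 ≤ M) (h : D 0 ≤ M ∧ D' 0 ≤ M ∨ 3 ≤ D 0 ∧ 3 ≤ D' 0) :
    dist (lurothSeries D) (lurothSeries D') ≤ 1 - (M : ℝ)⁻¹ := by
  have mem_of_le {E : ℕ → ℕ} (hE : ∀ n, 2 ≤ E n) (h : E 0 ≤ M) :
      lurothSeries E ∈ Icc (M : ℝ)⁻¹ 1 :=
    ⟨(inv_anti₀ (Nat.cast_pos.2 (two_pos.trans_le (hE 0))) (Nat.cast_le.2 h)).trans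
      (lurothSeries_mem_Ioc hE).1.le, (lurothSeries_mem_Ioc_zero_one hE).2⟩
  have mem_of_three_le {E : ℕ → ℕ} (hE : ∀ n, 2 ≤ E n) (h : 3 ≤ E 0) :
      lurothSeries E ∈ Icc (0 : ℝ) 2⁻¹ := by
    have h' : (3 : ℝ) ≤ E 0 := Nat.ofNat_le_cast.2 h
    exact ⟨(lurothSeries_mem_Ioc_zero_one hE).1.le,
      (lurothSeries_mem_Ioc hE).2.trans (inv_anti₀ two_pos (by linarith))⟩
  rcases h with ⟨h, h'⟩ | ⟨h, h'⟩
  · exact Real.dist_le_of_mem_Icc (mem_of_le hD h) (mem_of_le hD' h')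
  · have hM' : (M : ℝ)⁻¹ ≤ 2⁻¹ := inv_anti₀ two_pos (Nat.ofNat_le_cast.2 hM)
    linarith [Real.dist_le_of_mem_Icc (mem_of_three_le hD h) (mem_of_three_le hD' h')]

lemma prod_lurothRatio_mul_le_dist_lurothSeries (hD : ∀ n, 2 ≤ D n) (hD' : ∀ n, 2 ≤ D' n)
    {n M : ℕ} (heq : ∀ i < n, D i = D' i) (hne : D n ≠ D' n) (hM : D n ≤ M) (hM' : D' n ≤ M)
    {ε : ℝ} (hε : dist (lurothSeries fun i => D (i + (n + 1)))
      (lurothSeries fun i => D' (i + (n + 1))) ≤ 1 - ε) :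
    (∏ i ∈ Finset.range n, lurothRatio (D i)) * (ε / M ^ 2) ≤
      dist (lurothSeries D) (lurothSeries D') := by
  have htelescope : lurothSeries D - lurothSeries D' =
      (∏ i ∈ Finset.range n, lurothRatio (D i)) *
        ((lurothSeries fun i => D (i + n)) - lurothSeries fun i => D' (i + n)) :=
    eq_prod_range_mul_of_forall_lt
      (e := fun k => (lurothSeries fun i => D (i + k)) - lurothSeries fun i => D' (i + k))
      fun i hi => by
        rw [lurothSeries_shift_eq_lurothBranch hD, lurothSeries_shift_eq_lurothBranch hD',
          ← heq i hi, lurothBranch_sub_lurothBranch]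
  have hP := prod_lurothRatio_pos hD n
  rw [Real.dist_eq, htelescope, abs_mul, abs_of_pos hP]
  refine mul_le_mul_of_nonneg_left ?_ hP.le
  rw [lurothSeries_shift_eq_lurothBranch hD, lurothSeries_shift_eq_lurothBranch hD']
  have hy := lurothSeries_mem_Ioc_zero_one fun i => hD (i + (n + 1))
  have hy' := lurothSeries_mem_Ioc_zero_one fun i => hD' (i + (n + 1))
  obtain ⟨hlow, hup⟩ := abs_le.1 hε
  rcases hne.lt_or_gt with h | h
  · exact (div_sq_le_lurothBranch_sub (hD n) h hM' hy.1.le hy'.2 (by linarith)).trans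
      (le_abs_self _)
  · rw [abs_sub_comm]
    exact (div_sq_le_lurothBranch_sub (hD' n) h hM hy'.1.le hy.2 (by linarith)).trans
      (le_abs_self _)

end Series

/-- The increasing affine bijection of `(0, 1]` onto `(1 / M, 1]`, the union of the cylinders with
first digit at most `M`. -/
noncomputable def lurothRescale (M : ℕ) (x : ℝ) : ℝ := (M : ℝ)⁻¹ + (1 - (M : ℝ)⁻¹) * x

/-- The orbit of `t` under `lurothT ∘ lurothRescale M`, pausing at the times in `S`. The composite
map has full branches, one for each digit from `2` to `M`, so every point of `(0, 1]` encodes a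
sequence of such digits. -/
noncomputable def skipOrbit (M : ℕ) (S : Set ℕ) (t : ℝ) : ℕ → ℝ
  | 0 => t
  | n + 1 => open Classical in
    if n ∈ S then skipOrbit M S t n else lurothT (lurothRescale M (skipOrbit M S t n))

/-- The digit sequence with the prescribed digits `q n` at the times `n ∈ S`, the digits encoded by
`t` being inserted in order at the other times. -/
noncomputable def skipDigit (M : ℕ) (S : Set ℕ) (q : ℕ → ℕ) (t : ℝ) (n : ℕ) : ℕ :=
  open Classical in if n ∈ S then q n else lurothD1 (lurothRescale M (skipOrbit M S t n))

/-- The contraction ratio of the step from time `n + 1` back to time `n` of `skipOrbit`, along the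
inverse branch at digit `d`. -/
noncomputable def skipRatio (M : ℕ) (S : Set ℕ) (n d : ℕ) : ℝ :=
  open Classical in if n ∈ S then 1 else lurothRatio d / (1 - (M : ℝ)⁻¹)

section Skip

variable {M : ℕ} {S : Set ℕ} {q : ℕ → ℕ} {t t' : ℝ} {n : ℕ}

lemma one_sub_inv_natCast_pos (hM : 2 ≤ M) : 0 < 1 - (M : ℝ)⁻¹ :=
  sub_pos.2 (inv_lt_one_of_one_lt₀ (Nat.one_lt_cast.2 hM))

lemma inv_lt_lurothRescale (hM : 2 ≤ M) (ht : 0 < t) : (M : ℝ)⁻¹ < lurothRescale M t :=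
  lt_add_of_pos_right _ (mul_pos (one_sub_inv_natCast_pos hM) ht)

lemma lurothRescale_mem_Ioc (hM : 2 ≤ M) (ht : t ∈ Ioc (0 : ℝ) 1) :
    lurothRescale M t ∈ Ioc (0 : ℝ) 1 := by
  refine ⟨lt_of_le_of_lt (by positivity) (inv_lt_lurothRescale hM ht.1), ?_⟩
  have := mul_le_of_le_one_right (one_sub_inv_natCast_pos hM).le ht.2
  unfold lurothRescale
  linarith

lemma skipOrbit_mem_Ioc (hM : 2 ≤ M) (ht : t ∈ Ioc (0 : ℝ) 1) (n : ℕ) :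
    skipOrbit M S t n ∈ Ioc (0 : ℝ) 1 := by
  induction n with
  | zero => exact ht
  | succ n ih =>
    rw [skipOrbit]
    split_ifs
    · exact ih
    · exact lurothT_mem_Ioc (lurothRescale_mem_Ioc hM ih)

lemma skipDigit_of_mem (hn : n ∈ S) (t : ℝ) : skipDigit M S q t n = q n := if_pos hn

lemma skipDigit_le (hM : 2 ≤ M) (ht : t ∈ Ioc (0 : ℝ) 1) (hn : n ∉ S) :
    skipDigit M S q t n ≤ M := by
  rw [skipDigit, if_neg hn]
  exact lurothD1_le (by omega) (inv_lt_lurothRescale hM (skipOrbit_mem_Ioc hM ht n).1)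

lemma two_le_skipDigit (hM : 2 ≤ M) (hq : ∀ n, 2 ≤ q n) (ht : t ∈ Ioc (0 : ℝ) 1) (n : ℕ) :
    2 ≤ skipDigit M S q t n := by
  unfold skipDigit
  split_ifs
  · exact hq n
  · exact two_le_lurothD1 (lurothRescale_mem_Ioc hM (skipOrbit_mem_Ioc hM ht n))

lemma skipRatio_nonneg (hM : 2 ≤ M) {d : ℕ} (hd : 2 ≤ d) : 0 ≤ skipRatio M S n d := by
  unfold skipRatio
  split_ifs
  · exact zero_le_one
  · exact div_nonneg (lurothRatio_pos hd).le (one_sub_inv_natCast_pos hM).le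

lemma skipOrbit_sub_skipOrbit (hM : 2 ≤ M) (ht : t ∈ Ioc (0 : ℝ) 1) (ht' : t' ∈ Ioc (0 : ℝ) 1)
    (h : skipDigit M S q t n = skipDigit M S q t' n) :
    skipOrbit M S t n - skipOrbit M S t' n =
      skipRatio M S n (skipDigit M S q t n) *
        (skipOrbit M S t (n + 1) - skipOrbit M S t' (n + 1)) := by
  by_cases hn : n ∈ S
  · simp only [skipRatio, skipOrbit, if_pos hn, one_mul]
  simp only [skipDigit, skipRatio, skipOrbit, if_neg hn] at h ⊢
  rw [div_mul_eq_mul_div, eq_div_iff (one_sub_inv_natCast_pos hM).ne',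
    ← lurothBranch_sub_lurothBranch,
    lurothBranch_lurothT (lurothRescale_mem_Ioc hM (skipOrbit_mem_Ioc hM ht n)), h,
    lurothBranch_lurothT (lurothRescale_mem_Ioc hM (skipOrbit_mem_Ioc hM ht' n))]
  unfold lurothRescale
  ring

lemma dist_le_prod_skipRatio (hM : 2 ≤ M) (hq : ∀ n, 2 ≤ q n) (ht : t ∈ Ioc (0 : ℝ) 1)
    (ht' : t' ∈ Ioc (0 : ℝ) 1) (h : ∀ i < n, skipDigit M S q t i = skipDigit M S q t' i) :
    dist t t' ≤ ∏ i ∈ Finset.range n, skipRatio M S i (skipDigit M S q t i) := by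
  have htelescope : t - t' = (∏ i ∈ Finset.range n, skipRatio M S i (skipDigit M S q t i)) *
      (skipOrbit M S t n - skipOrbit M S t' n) :=
    eq_prod_range_mul_of_forall_lt (e := fun k => skipOrbit M S t k - skipOrbit M S t' k)
      fun i hi => skipOrbit_sub_skipOrbit hM ht ht' (h i hi)
  have hnonneg : 0 ≤ ∏ i ∈ Finset.range n, skipRatio M S i (skipDigit M S q t i) :=
    Finset.prod_nonneg fun i _ => skipRatio_nonneg hM (two_le_skipDigit hM hq ht i)
  have hdist : |skipOrbit M S t n - skipOrbit M S t' n| ≤ 1 := by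
    simpa only [Real.dist_eq, sub_zero] using Real.dist_le_of_mem_Icc
      (Ioc_subset_Icc_self (skipOrbit_mem_Ioc hM ht n))
      (Ioc_subset_Icc_self (skipOrbit_mem_Ioc hM ht' n))
  rw [Real.dist_eq, htelescope, abs_mul, abs_of_nonneg hnonneg]
  exact mul_le_of_le_one_right hnonneg hdist

variable {s l : ℝ}

open Classical in
lemma skipRatio_le_rpow_mul_piecewise (hM : 2 ≤ M) (hs : s ≤ 1)
    (hl : (1 / 2 : ℝ) ^ (1 - s) ≤ l * (1 - (M : ℝ)⁻¹)) {d : ℕ} (hd : 2 ≤ d)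
    (hdq : n ∈ S → d = q n) :
    skipRatio M S n d ≤
      lurothRatio d ^ s * S.piecewise (fun n => (q n : ℝ) ^ 2) (fun _ => l) n := by
  have hr := lurothRatio_pos hd
  have hr2 := lurothRatio_le_half hd
  by_cases hn : n ∈ S
  · rw [skipRatio, if_pos hn, piecewise_eq_of_mem _ _ _ hn, ← hdq hn, ← div_le_iff₀ (by positivity),
      one_div]
    exact (inv_sq_le_lurothRatio hd le_rfl).trans
      (self_le_rpow_of_le_one hr.le (hr2.trans (by norm_num)) hs)
  · rw [skipRatio, if_neg hn, piecewise_eq_of_notMem _ _ _ hn,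
      div_le_iff₀ (one_sub_inv_natCast_pos hM), mul_assoc]
    calc lurothRatio d = lurothRatio d ^ s * lurothRatio d ^ (1 - s) := by
          rw [← rpow_add hr, add_sub_cancel, rpow_one]
      _ ≤ lurothRatio d ^ s * (1 / 2) ^ (1 - s) := by
          have := sub_nonneg.2 hs
          gcongr
      _ ≤ lurothRatio d ^ s * (l * (1 - (M : ℝ)⁻¹)) := by gcongr

open Classical in
lemma prod_skipRatio_le_rpow (hM : 2 ≤ M) (hq : ∀ n, 2 ≤ q n) (hs : s ≤ 1)
    (hl : (1 / 2 : ℝ) ^ (1 - s) ≤ l * (1 - (M : ℝ)⁻¹))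
    (hS : ∏ i ∈ Finset.range n, S.piecewise (fun n => (q n : ℝ) ^ 2) (fun _ => l) i ≤ 1)
    (ht : t ∈ Ioc (0 : ℝ) 1) :
    ∏ i ∈ Finset.range n, skipRatio M S i (skipDigit M S q t i) ≤
      (∏ i ∈ Finset.range n, lurothRatio (skipDigit M S q t i)) ^ s := by
  have hD := two_le_skipDigit (S := S) hM hq ht
  have hP := prod_lurothRatio_pos hD n
  calc ∏ i ∈ Finset.range n, skipRatio M S i (skipDigit M S q t i)
    _ ≤ ∏ i ∈ Finset.range n, lurothRatio (skipDigit M S q t i) ^ s *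
          S.piecewise (fun n => (q n : ℝ) ^ 2) (fun _ => l) i :=
        Finset.prod_le_prod (fun i _ => skipRatio_nonneg hM (hD i)) fun i _ =>
          skipRatio_le_rpow_mul_piecewise hM hs hl (hD i) fun hi => skipDigit_of_mem hi t
    _ = (∏ i ∈ Finset.range n, lurothRatio (skipDigit M S q t i)) ^ s *
          ∏ i ∈ Finset.range n, S.piecewise (fun n => (q n : ℝ) ^ 2) (fun _ => l) i := by
        rw [Finset.prod_mul_distrib, finsetProd_rpow _ _ fun i _ => (lurothRatio_pos (hD i)).le]
    _ ≤ (∏ i ∈ Finset.range n, lurothRatio (skipDigit M S q t i)) ^ s :=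
        mul_le_of_le_one_right (by positivity) hS

lemma eq_of_forall_skipDigit_eq (hM : 2 ≤ M) (hq : ∀ n, 2 ≤ q n) (hs : 0 < s)
    (ht : t ∈ Ioc (0 : ℝ) 1) (ht' : t' ∈ Ioc (0 : ℝ) 1)
    (hprod : ∀ n, ∏ i ∈ Finset.range n, skipRatio M S i (skipDigit M S q t i) ≤
      (∏ i ∈ Finset.range n, lurothRatio (skipDigit M S q t i)) ^ s)
    (h : ∀ n, skipDigit M S q t n = skipDigit M S q t' n) : t = t' := by
  have hD := two_le_skipDigit (S := S) hM hq ht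
  have hlim : Tendsto (fun n : ℕ => ((1 / 2 : ℝ) ^ n) ^ s) atTop (𝓝 0) := by
    simpa only [zero_rpow hs.ne'] using
      (tendsto_pow_atTop_nhds_zero_of_lt_one (r := (1 / 2 : ℝ)) (by norm_num)
        (by norm_num)).rpow_const (Or.inr hs.le)
  refine dist_le_zero.1 (ge_of_tendsto' hlim fun n => ?_)
  calc dist t t' ≤ ∏ i ∈ Finset.range n, skipRatio M S i (skipDigit M S q t i) :=
        dist_le_prod_skipRatio hM hq ht ht' fun i _ => h i
    _ ≤ (∏ i ∈ Finset.range n, lurothRatio (skipDigit M S q t i)) ^ s := hprod n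
    _ ≤ ((1 / 2) ^ n) ^ s :=
        rpow_le_rpow (prod_lurothRatio_pos hD n).le (prod_lurothRatio_le_half_pow hD n) hs.le

/- Prescribed digits are at least `3`, so that the two series keep a definite distance from the ends
of the cylinders that separate them even if the first difference precedes a prescribed digit. -/
lemma prod_lurothRatio_le_mul_dist_lurothSeries_skipDigit (hM : 2 ≤ M) (hq : ∀ n, 3 ≤ q n)
    (ht : t ∈ Ioc (0 : ℝ) 1) (ht' : t' ∈ Ioc (0 : ℝ) 1)
    (heq : ∀ i < n, skipDigit M S q t i = skipDigit M S q t' i)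
    (hne : skipDigit M S q t n ≠ skipDigit M S q t' n) :
    ∏ i ∈ Finset.range n, lurothRatio (skipDigit M S q t i) ≤
      M ^ 3 * dist (lurothSeries (skipDigit M S q t)) (lurothSeries (skipDigit M S q t')) := by
  have hq2 (n : ℕ) : 2 ≤ q n := (hq n).trans' (by norm_num)
  have hnS : n ∉ S := fun h => hne (by rw [skipDigit_of_mem h, skipDigit_of_mem h])
  have hD := two_le_skipDigit (S := S) hM hq2 ht
  have hD' := two_le_skipDigit (S := S) hM hq2 ht'
  have hnext : dist (lurothSeries fun i => skipDigit M S q t (i + (n + 1)))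
      (lurothSeries fun i => skipDigit M S q t' (i + (n + 1))) ≤ 1 - (M : ℝ)⁻¹ := by
    refine dist_lurothSeries_le_one_sub_inv (fun i => hD _) (fun i => hD' _) hM ?_
    rw [zero_add]
    by_cases h : n + 1 ∈ S
    · rw [skipDigit_of_mem h, skipDigit_of_mem h]
      exact Or.inr ⟨hq _, hq _⟩
    · exact Or.inl ⟨skipDigit_le hM ht h, skipDigit_le hM ht' h⟩
  have hsep := prod_lurothRatio_mul_le_dist_lurothSeries hD hD' heq hne (skipDigit_le hM ht hnS)
    (skipDigit_le hM ht' hnS) hnext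
  calc ∏ i ∈ Finset.range n, lurothRatio (skipDigit M S q t i)
    _ = M ^ 3 * ((∏ i ∈ Finset.range n, lurothRatio (skipDigit M S q t i)) *
          ((M : ℝ)⁻¹ / M ^ 2)) := by field_simp
    _ ≤ M ^ 3 * dist (lurothSeries (skipDigit M S q t)) (lurothSeries (skipDigit M S q t')) := by
        gcongr

lemma dist_le_mul_dist_lurothSeries_skipDigit_rpow (hM : 2 ≤ M) (hq : ∀ n, 3 ≤ q n)
    (hs : s ∈ Ioc (0 : ℝ) 1) (ht : t ∈ Ioc (0 : ℝ) 1) (ht' : t' ∈ Ioc (0 : ℝ) 1)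
    (hprod : ∀ n, ∏ i ∈ Finset.range n, skipRatio M S i (skipDigit M S q t i) ≤
      (∏ i ∈ Finset.range n, lurothRatio (skipDigit M S q t i)) ^ s) :
    dist t t' ≤ M ^ 3 *
      dist (lurothSeries (skipDigit M S q t)) (lurothSeries (skipDigit M S q t')) ^ s := by
  classical
  have hq2 (n : ℕ) : 2 ≤ q n := (hq n).trans' (by norm_num)
  by_cases hne : ∃ n, skipDigit M S q t n ≠ skipDigit M S q t' n
  swap
  · push Not at hne
    rw [eq_of_forall_skipDigit_eq hM hq2 hs.1 ht ht' hprod hne, dist_self]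
    positivity
  obtain ⟨n, hn, hlt⟩ : ∃ n, skipDigit M S q t n ≠ skipDigit M S q t' n ∧
      ∀ i < n, skipDigit M S q t i = skipDigit M S q t' i :=
    ⟨Nat.find hne, Nat.find_spec hne, fun i hi => not_not.1 (Nat.find_min hne hi)⟩
  have hsep := prod_lurothRatio_le_mul_dist_lurothSeries_skipDigit hM hq ht ht' hlt hn
  have hP := prod_lurothRatio_pos (two_le_skipDigit (S := S) hM hq2 ht) n
  set P := ∏ i ∈ Finset.range n, lurothRatio (skipDigit M S q t i)
  set δ := dist (lurothSeries (skipDigit M S q t)) (lurothSeries (skipDigit M S q t'))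
  have hM3 : (1 : ℝ) ≤ M ^ 3 := one_le_pow₀ (Nat.one_le_cast.2 (one_le_two.trans hM))
  calc dist t t' ≤ P ^ s := (dist_le_prod_skipRatio hM hq2 ht ht' hlt).trans (hprod n)
    _ ≤ (M ^ 3 * δ) ^ s := rpow_le_rpow hP.le hsep hs.1.le
    _ = (M ^ 3) ^ s * δ ^ s := mul_rpow (by positivity) dist_nonneg
    _ ≤ M ^ 3 * δ ^ s := by
        gcongr
        exact rpow_le_self_of_one_le hM3 hs.2

end Skip

lemma exists_le_dimH_image_lurothSeries {q : ℕ → ℕ} (hq : ∀ n, 3 ≤ q n)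
    (hsub : ∀ l ∈ Ioo (0 : ℝ) 1, Tendsto (fun n => (q n : ℝ) ^ 2 * l ^ n) atTop (𝓝 0))
    {s : ℝ≥0} (hs : s ∈ Ioo 0 1) :
    ∃ (M : ℕ) (S : Set ℕ), (∃ᶠ n in atTop, n ∈ S) ∧ (s : ℝ≥0∞) ≤
      dimH (lurothSeries ''
        {D | (∀ n, 2 ≤ D n) ∧ (∀ n ∈ S, D n = q n) ∧ ∀ n ∉ S, D n ≤ M}) := by
  have hs1 : (s : ℝ) < 1 := NNReal.coe_lt_one.2 hs.2
  have hq2 (n : ℕ) : 2 ≤ q n := (hq n).trans' (by norm_num)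
  obtain ⟨M, hM, l, hl, hlM⟩ :=
    exists_nat_rpow_le_mul_one_sub_inv (a := 1 / 2) ⟨by norm_num, by norm_num⟩ (sub_pos.2 hs1)
  obtain ⟨S, hS, hSprod⟩ := exists_frequently_mem_prod_piecewise_le_one hl (hsub l hl)
  refine ⟨M, S, hS, ?_⟩
  have hdim := dimH_le_dimH_image_div (f := fun t => lurothSeries (skipDigit M S q t))
    (A := Ioc (0 : ℝ) 1) (C := M ^ 3) hs.1 fun t ht t' ht' =>
      edist_le_mul_edist_rpow_of_dist_le <| by
        exact_mod_cast dist_le_mul_dist_lurothSeries_skipDigit_rpow hM hq ⟨hs.1, hs1.le⟩ ht ht'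
          fun n => prod_skipRatio_le_rpow hM hq2 hs1.le hlM (hSprod n) ht
  rw [Real.dimH_of_nonempty_interior (by simp), Module.finrank_self, Nat.cast_one,
    ENNReal.le_div_iff_mul_le (by simp [hs.1.ne']) (by simp), one_mul] at hdim
  refine hdim.trans (dimH_mono ?_)
  rintro _ ⟨t, ht, rfl⟩
  exact mem_image_of_mem _ ⟨two_le_skipDigit hM hq2 ht, fun n hn => skipDigit_of_mem hn t,
    fun n hn => skipDigit_le hM ht hn⟩

theorem dimH_lurothDigit_frequently_eq_eventually_le {q : ℕ → ℕ} (hq : Tendsto q atTop atTop)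
    (hlog : Tendsto (fun n => log (q n) / n) atTop (𝓝 0)) :
    dimH {x | x ∈ Ioc (0 : ℝ) 1 ∧ (∃ᶠ n in atTop, lurothDigit n x = q n) ∧
      ∀ᶠ n in atTop, lurothDigit n x ≤ q n} = 1 := by
  refine le_antisymm ((dimH_mono (subset_univ _)).trans Real.dimH_univ.le) ?_
  refine ENNReal.le_of_forall_nnreal_lt fun s hs => ?_
  rcases eq_zero_or_pos s with rfl | hs0
  · exact zero_le
  have hmax : ∀ᶠ n in atTop, max 3 (q (n + 1)) = q (n + 1) :=
    (tendsto_add_atTop_nat 1).eventually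
      ((hq.eventually_ge_atTop 3).mono fun n => max_eq_right)
  have hsub (l : ℝ) (hl : l ∈ Ioo (0 : ℝ) 1) :
      Tendsto (fun n => ((max 3 (q (n + 1)) : ℕ) : ℝ) ^ 2 * l ^ n) atTop (𝓝 0) := by
    have hpos : ∀ᶠ n in atTop, (0 : ℝ) < q n :=
      (hq.eventually_gt_atTop 0).mono fun n => Nat.cast_pos.2
    have hshift := ((tendsto_add_atTop_iff_nat 1).2
      (tendsto_pow_mul_pow_of_tendsto_log_div hpos hlog 2 hl)).mul_const l⁻¹
    rw [zero_mul] at hshift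
    refine hshift.congr' (hmax.mono fun n hn => ?_)
    simp only [hn, pow_succ l, ← mul_assoc, mul_inv_cancel_right₀ hl.1.ne']
  obtain ⟨M, S, hS, hdim⟩ := exists_le_dimH_image_lurothSeries (fun n => le_max_left 3 (q (n + 1)))
    hsub ⟨hs0, by exact_mod_cast hs⟩
  refine hdim.trans (dimH_mono ?_)
  rintro _ ⟨D, ⟨hD, hDS, hDM⟩, rfl⟩
  have hdigit {n : ℕ} (hn : max 3 (q (n + 1)) = q (n + 1)) (hnS : n ∈ S) :
      lurothDigit (n + 1) (lurothSeries D) = q (n + 1) := by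
    rw [lurothDigit_lurothSeries hD, hDS n hnS, hn]
  refine ⟨lurothSeries_mem_Ioc_zero_one hD, ?_, ?_⟩
  · exact (tendsto_add_atTop_nat 1).frequently
      ((hS.and_eventually hmax).mono fun n hn => hdigit hn.2 hn.1)
  · rw [← map_add_atTop_eq_nat 1, eventually_map]
    filter_upwards [hmax, (tendsto_add_atTop_nat 1).eventually (hq.eventually_ge_atTop M)]
      with n hn hMn
    by_cases hnS : n ∈ S
    · exact (hdigit hn hnS).le
    · exact (lurothDigit_lurothSeries hD n).trans_le ((hDM n hnS).trans hMn)

theorem dimH_luroth_Esup_psi_slow (ψ : ℕ → ℝ) (hpos : ∀ n : ℕ, 1 ≤ n → 0 < ψ n)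
    (hψ : Tendsto ψ atTop atTop)
    (hslow : Tendsto (fun n : ℕ => ψ n / n) atTop (𝓝 0)) :
    dimH {x : ℝ | x ∈ Set.Ioc (0 : ℝ) 1 ∧
        Filter.limsup (fun n : ℕ => Real.log (lurothDigit n x) / ψ n) atTop = 1}
      = 1 := by
  let q : ℕ → ℕ := fun n => ⌊exp (ψ n)⌋₊
  have hq : Tendsto q atTop atTop := tendsto_nat_floor_atTop.comp (tendsto_exp_atTop.comp hψ)
  have hqψ : Tendsto (fun n => log (q n) / ψ n) atTop (𝓝 1) := tendsto_log_floor_exp_div.comp hψ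
  have hlog : Tendsto (fun n => log (q n) / n) atTop (𝓝 0) := by
    have hmul := hqψ.mul hslow
    rw [mul_zero] at hmul
    refine hmul.congr' ((hψ.eventually_gt_atTop 0).mono fun n hn => ?_)
    exact div_mul_div_cancel₀ hn.ne'
  refine le_antisymm ((dimH_mono (subset_univ _)).trans Real.dimH_univ.le) ?_
  rw [← dimH_lurothDigit_frequently_eq_eventually_le hq hlog]
  refine dimH_mono fun x hx => ⟨hx.1, ?_⟩
  refine limsup_eq_of_tendsto_of_le_of_frequently_eq hqψ ?_ (hx.2.1.mono fun n hn => by rw [hn])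
  filter_upwards [hx.2.2, hψ.eventually_gt_atTop 0] with n hn hψn
  gcongr
  exact Nat.cast_pos.2 (Nat.succ_pos _)
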